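/- For α ∈ (0, π], let 𝕊_α be the circular sector of the unit disk between angles 0 and α, and △_α the triangle with vertices O=(0,0), A=(1,0), B=(cos α, sin α). Then (1/π)∫_{𝕊_α} d²(x, △_α) dx = (1/(2π))( α/4 − (13/12) sin α + α cos²(α/2) − (1/3) sin(α/2) cos³(α/2) ), where for x ∈ 𝕊_α \ △_α the distance d(x, △_α) equals the distance from x to the chord AB, namely for x = (r cos θ, r sin θ) it is r cos(θ − α/2) − cos(α/2). -/

import Mathlib

open Real MeasureTheory

noncomputable def pt (x y : ℝ) : EuclideanSpace ℝ (Fin 2) :=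
  (WithLp.equiv 2 (Fin 2 → ℝ)).symm ![x, y]

/-- The circular sector of the unit disk between angles `0` and `α`. -/
def sector (α : ℝ) : Set (EuclideanSpace ℝ (Fin 2)) :=
  {p | ∃ r θ : ℝ, r ∈ Set.Icc (0 : ℝ) 1 ∧ θ ∈ Set.Icc (0 : ℝ) α ∧
    p = pt (r * Real.cos θ) (r * Real.sin θ)}

/-- The triangle with vertices `O`, `A = (1,0)` and `B = (cos α, sin α)`. -/
noncomputable def tri (α : ℝ) : Set (EuclideanSpace ℝ (Fin 2)) :=
  convexHull ℝ {pt 0 0, pt 1 0, pt (Real.cos α) (Real.sin α)}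

noncomputable def Ifun (α : ℝ) : ℝ :=
  (1 / (2 * π)) * (α / 4 - 13 / 12 * Real.sin α + α * Real.cos (α / 2) ^ 2 -
    1 / 3 * Real.sin (α / 2) * Real.cos (α / 2) ^ 3)

open Set

theorem mem_tri_of_nonneg {α w₁ w₂ : ℝ} (h₁ : 0 ≤ w₁) (h₂ : 0 ≤ w₂) (h : w₁ + w₂ ≤ 1) :
    pt (w₁ + w₂ * cos α) (w₂ * sin α) ∈ tri α := by
  have hsub : ∀ p ∈ ({pt 0 0, pt 1 0, pt (cos α) (sin α)} : Set (EuclideanSpace ℝ (Fin 2))),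
      p ∈ tri α := fun p hp => subset_convexHull ℝ _ hp
  have hconv : Convex ℝ (tri α) := convex_convexHull ℝ _
  have hsum := hconv.sum_mem (t := Finset.univ) (w := ![1 - w₁ - w₂, w₁, w₂])
    (z := ![pt 0 0, pt 1 0, pt (cos α) (sin α)])
    (by intro i _; fin_cases i <;> simp <;> linarith)
    (by simp [Fin.sum_univ_three]; ring) (by intro i _; fin_cases i <;> exact hsub _ (by simp))
  convert hsum using 1
  ext i
  fin_cases i <;> simp [Fin.sum_univ_three, pt]

theorem dist_pt (x y x' y' : ℝ) : dist (pt x y) (pt x' y') = √((x - x') ^ 2 + (y - y') ^ 2) := by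
  simp [EuclideanSpace.dist_eq, pt, Real.dist_eq, sq_abs]

theorem isCompact_tri (α : ℝ) : IsCompact (tri α) :=
  (Set.toFinite _).isCompact_convexHull (𝕜 := ℝ)

theorem pt_zero_mem_tri (α : ℝ) : pt 0 0 ∈ tri α := subset_convexHull ℝ _ (by simp)

theorem continuous_pt : Continuous fun p : ℝ × ℝ => pt p.1 p.2 := by
  unfold pt
  refine (PiLp.continuous_toLp 2 _).comp ?_
  fun_prop

/-- The triangle lies on one side of the line `AB`. -/
theorem inner_le_of_mem_tri {α : ℝ} (hα : α ∈ Ioc (0 : ℝ) π) {p : EuclideanSpace ℝ (Fin 2)}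
    (hp : p ∈ tri α) : p 0 * cos (α / 2) + p 1 * sin (α / 2) ≤ cos (α / 2) := by
  have hc : 0 ≤ cos (α / 2) := cos_nonneg_of_mem_Icc ⟨by linarith [hα.1, pi_pos], by linarith [hα.2]⟩
  have hconv : Convex ℝ {p : EuclideanSpace ℝ (Fin 2) |
      p 0 * cos (α / 2) + p 1 * sin (α / 2) ≤ cos (α / 2)} := by
    refine convex_halfSpace_le (f := fun p : EuclideanSpace ℝ (Fin 2) =>
      p 0 * cos (α / 2) + p 1 * sin (α / 2)) ⟨fun x y => ?_, fun c x => ?_⟩ _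
    · simp; ring
    · simp; ring
  refine convexHull_min ?_ hconv hp
  rintro q (rfl | rfl | rfl)
  · simpa [pt] using hc
  · simp [pt]
  · have h : cos α * cos (α / 2) + sin α * sin (α / 2) = cos (α / 2) := by
      rw [← cos_sub]; congr 1; ring
    simp [pt, h]

theorem mul_cos_sub_le_dist (u x y x' y' : ℝ) :
    (x - x') * cos u + (y - y') * sin u ≤ dist (pt x y) (pt x' y') := by
  rw [dist_pt]
  apply Real.le_sqrt_of_sq_le
  nlinarith [sq_nonneg ((x - x') * sin u - (y - y') * cos u), sin_sq_add_cos_sq u]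

theorem pt_mem_tri_of_le {α r θ : ℝ} (hα : α ∈ Ioc (0 : ℝ) π) (hr : r ∈ Icc (0 : ℝ) 1)
    (hθ : θ ∈ Icc (0 : ℝ) α) (h : r * cos (θ - α / 2) ≤ cos (α / 2)) :
    pt (r * cos θ) (r * sin θ) ∈ tri α := by
  obtain ⟨hr0, hr1⟩ := hr
  obtain ⟨hθ0, hθα⟩ := hθ
  rcases hα.2.eq_or_lt with rfl | hlt
  · have hs : 0 ≤ sin θ := sin_nonneg_of_nonneg_of_le_pi hθ0 hθα
    rw [cos_sub_pi_div_two, cos_pi_div_two] at h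
    have h0 : r * sin θ = 0 := le_antisymm h (mul_nonneg hr0 hs)
    have habs : |r * cos θ| ≤ 1 := by
      rw [abs_mul, abs_of_nonneg hr0]
      exact mul_le_one₀ hr1 (abs_nonneg _) (abs_cos_le_one θ)
    have habs := abs_le.1 habs
    have hm := mem_tri_of_nonneg (α := π) (w₁ := (1 + r * cos θ) / 2) (w₂ := (1 - r * cos θ) / 2)
      (by linarith) (by linarith) (by linarith)
    convert hm using 2
    · simp; ring
    · simp [h0]
  · have hsin : 0 < sin α := sin_pos_of_pos_of_lt_pi hα.1 hlt
    have hc : 0 < cos (α / 2) := cos_pos_of_mem_Ioo ⟨by linarith [hα.1, pi_pos], by linarith⟩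
    have hsa : 0 < sin (α / 2) := sin_pos_of_pos_of_lt_pi (by linarith [hα.1]) (by linarith [hα.1])
    have h2 : sin α = 2 * sin (α / 2) * cos (α / 2) := by rw [← sin_two_mul]; congr 1; ring
    have hsum : sin (α - θ) + sin θ = 2 * sin (α / 2) * cos (θ - α / 2) := by
      have e1 : α - θ = α / 2 - (θ - α / 2) := by ring
      have e2 : sin θ = sin (α / 2 + (θ - α / 2)) := by congr 1; ring
      rw [e1, e2, sin_sub, sin_add]; ring
    have hm := mem_tri_of_nonneg (α := α) (w₁ := r * sin (α - θ) / sin α)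
      (w₂ := r * sin θ / sin α)
      (div_nonneg (mul_nonneg hr0
        (sin_nonneg_of_nonneg_of_le_pi (by linarith) (by linarith))) hsin.le)
      (div_nonneg (mul_nonneg hr0
        (sin_nonneg_of_nonneg_of_le_pi hθ0 (by linarith))) hsin.le)
      (by
        rw [← add_div, ← mul_add, hsum, div_le_one hsin, h2]
        nlinarith)
    convert hm using 2
    · rw [sin_sub]; field_simp; ring
    · field_simp

theorem infDist_tri {α r θ : ℝ} (hα : α ∈ Ioc (0 : ℝ) π) (hr : r ∈ Icc (0 : ℝ) 1)
    (hθ : θ ∈ Icc (0 : ℝ) α) :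
    Metric.infDist (pt (r * cos θ) (r * sin θ)) (tri α) =
      max (r * cos (θ - α / 2) - cos (α / 2)) 0 := by
  rcases le_or_gt (r * cos (θ - α / 2)) (cos (α / 2)) with h | h
  · rw [max_eq_right (by linarith), Metric.infDist_zero_of_mem (pt_mem_tri_of_le hα hr hθ h)]
  rw [max_eq_left (by linarith)]
  have hrc : r * cos θ * cos (α / 2) + r * sin θ * sin (α / 2) = r * cos (θ - α / 2) := by
    rw [cos_sub]; ring
  apply le_antisymm
  · set φ := θ - α / 2 with hφ
    have hθφ : θ = φ + α / 2 := by rw [hφ]; ring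
    have hc : 0 ≤ cos (α / 2) :=
      cos_nonneg_of_mem_Icc ⟨by linarith [hα.1, pi_pos], by linarith [hα.2]⟩
    have hs : 0 < sin (α / 2) :=
      sin_pos_of_pos_of_lt_pi (by linarith [hα.1]) (by linarith [hα.1, hα.2])
    have habs : |r * sin φ| ≤ sin (α / 2) := by
      apply abs_le_of_sq_le_sq _ hs.le
      have hr2 : r ^ 2 ≤ 1 := pow_le_one₀ hr.1 hr.2
      nlinarith [sin_sq_add_cos_sq φ, sin_sq_add_cos_sq (α / 2)]
    have habs := abs_le.1 habs
    have e1 : sin α = 2 * sin (α / 2) * cos (α / 2) := by rw [← sin_two_mul]; congr 1; ring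
    have e2 : cos α = 1 - 2 * sin (α / 2) ^ 2 := by
      have h2 := cos_two_mul (α / 2)
      rw [mul_div_cancel₀ α two_ne_zero] at h2
      linear_combination h2 + 2 * sin_sq_add_cos_sq (α / 2)
    have hm := mem_tri_of_nonneg (α := α) (w₁ := (1 - r * sin φ / sin (α / 2)) / 2)
      (w₂ := (1 + r * sin φ / sin (α / 2)) / 2)
      (by have := (div_le_one hs).2 habs.2; linarith)
      (by have : -1 ≤ r * sin φ / sin (α / 2) := by rw [le_div_iff₀ hs]; linarith
          linarith) (by linarith)
    refine (Metric.infDist_le_dist_of_mem hm).trans ?_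
    rw [dist_pt]
    apply Real.sqrt_le_iff.2 ⟨by linarith, le_of_eq ?_⟩
    have hx : r * cos θ - ((1 - r * sin φ / sin (α / 2)) / 2 +
        (1 + r * sin φ / sin (α / 2)) / 2 * cos α) =
        (r * cos φ - cos (α / 2)) * cos (α / 2) := by
      rw [hθφ, cos_add, e2]; field_simp
      linear_combination 2 * sin (α / 2) * sin_sq_add_cos_sq (α / 2)
    have hy : r * sin θ - (1 + r * sin φ / sin (α / 2)) / 2 * sin α =
        (r * cos φ - cos (α / 2)) * sin (α / 2) := by
      rw [hθφ, sin_add, e1]; field_simp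
      ring
    rw [hx, hy]
    linear_combination (r * cos φ - cos (α / 2)) ^ 2 * sin_sq_add_cos_sq (α / 2)
  · refine (Metric.le_infDist ⟨_, pt_zero_mem_tri α⟩).2 fun q hq => ?_
    have hq' : q = pt (q 0) (q 1) := by ext i; fin_cases i <;> simp [pt]
    have h1 := inner_le_of_mem_tri hα hq
    have h2 := mul_cos_sub_le_dist (α / 2) (r * cos θ) (r * sin θ) (q 0) (q 1)
    rw [← hq'] at h2
    nlinarith

theorem measurePreserving_pt : MeasurePreserving fun p : ℝ × ℝ => pt p.1 p.2 := by
  have h := (EuclideanSpace.volume_preserving_symm_measurableEquiv_toLp (Fin 2)).symm.comp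
    (volume_preserving_finTwoArrow ℝ).symm
  exact h

theorem sector_eq_image (α : ℝ) : sector α =
    (fun p : ℝ × ℝ => pt (p.1 * cos p.2) (p.1 * sin p.2)) '' (Icc 0 1 ×ˢ Icc 0 α) := by
  ext p
  constructor
  · rintro ⟨r, θ, hr, hθ, rfl⟩
    exact ⟨(r, θ), ⟨hr, hθ⟩, rfl⟩
  · rintro ⟨⟨r, θ⟩, ⟨hr, hθ⟩, rfl⟩
    exact ⟨r, θ, hr, hθ, rfl⟩

theorem measurableSet_sector (α : ℝ) : MeasurableSet (sector α) := by
  rw [sector_eq_image]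
  refine ((isCompact_Icc.prod isCompact_Icc).image ?_).measurableSet
  exact continuous_pt.comp (by fun_prop : Continuous fun p : ℝ × ℝ => (p.1 * cos p.2, p.1 * sin p.2))

theorem pt_mem_sector_iff {α r θ : ℝ} (hα : α ≤ π) (hr : 0 < r) (hθ : θ ∈ Ioo (-π) π) :
    pt (r * cos θ) (r * sin θ) ∈ sector α ↔ r ≤ 1 ∧ θ ∈ Icc 0 α := by
  constructor
  · rintro ⟨r', θ', hr', hθ', h⟩
    have h0 : r * cos θ = r' * cos θ' := by simpa [pt] using congrArg (fun p => p 0) h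
    have h1 : r * sin θ = r' * sin θ' := by simpa [pt] using congrArg (fun p => p 1) h
    have hrr : r = r' := by
      apply (sq_eq_sq₀ hr.le hr'.1).1
      linear_combination (r * cos θ + r' * cos θ') * h0 + (r * sin θ + r' * sin θ') * h1 -
        r ^ 2 * sin_sq_add_cos_sq θ + r' ^ 2 * sin_sq_add_cos_sq θ'
    subst hrr
    have hcos := mul_left_cancel₀ hr.ne' h0
    have hsin := mul_left_cancel₀ hr.ne' h1
    have hs' : 0 ≤ sin θ' := sin_nonneg_of_nonneg_of_le_pi hθ'.1 (hθ'.2.trans hα)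
    have hθ0 : 0 ≤ θ := by
      by_contra! hneg
      have := sin_neg_of_neg_of_neg_pi_lt hneg hθ.1
      linarith
    have := injOn_cos ⟨hθ0, hθ.2.le⟩ ⟨hθ'.1, hθ'.2.trans hα⟩ hcos
    exact ⟨hr'.2, this ▸ hθ'⟩
  · rintro ⟨h1, h2⟩
    exact ⟨r, θ, ⟨hr.le, h1⟩, h2, rfl⟩

/-- Integration over the sector in polar coordinates. -/
theorem setIntegral_sector {α : ℝ} (hα : α ≤ π) (f : EuclideanSpace ℝ (Fin 2) → ℝ) :
    ∫ x in sector α, f x =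
      ∫ p in Ioc (0 : ℝ) 1 ×ˢ Ioc (0 : ℝ) α, p.1 * f (pt (p.1 * cos p.2) (p.1 * sin p.2)) := by
  rw [← integral_indicator (measurableSet_sector α),
    ← measurePreserving_pt.integral_comp (f := fun p : ℝ × ℝ => pt p.1 p.2)
      ((MeasurableEquiv.finTwoArrow.symm.trans
        (MeasurableEquiv.toLp 2 (Fin 2 → ℝ))).measurableEmbedding),
    ← integral_comp_polarCoord_symm]
  have hS : MeasurableSet (Ioc (0 : ℝ) 1 ×ˢ Ioc (0 : ℝ) α) := measurableSet_Ioc.prod measurableSet_Ioc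
  have hT : MeasurableSet (Ioc (0 : ℝ) 1 ×ˢ (Icc (0 : ℝ) α ∩ Ioo (-π) π)) :=
    measurableSet_Ioc.prod (measurableSet_Icc.inter measurableSet_Ioo)
  have hae : (Ioc (0 : ℝ) 1 ×ˢ Ioc (0 : ℝ) α : Set (ℝ × ℝ)) =ᵐ[volume]
      (Ioc (0 : ℝ) 1 ×ˢ (Icc (0 : ℝ) α ∩ Ioo (-π) π) : Set (ℝ × ℝ)) := by
    refine Measure.set_prod_ae_eq Filter.EventuallyEq.rfl ?_
    have h1 : ∀ᵐ θ : ℝ, θ ≠ 0 := by simp [ae_iff]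
    have h2 : ∀ᵐ θ : ℝ, θ ≠ π := by simp [ae_iff]
    filter_upwards [h1, h2] with θ h1 h2
    refine propext ⟨fun h => ⟨⟨h.1.le, h.2⟩, ?_, ?_⟩, fun h => ⟨?_, h.1.2⟩⟩
    · linarith [h.1, pi_pos]
    · exact lt_of_le_of_ne (h.2.trans hα) h2
    · exact lt_of_le_of_ne h.1.1 (Ne.symm h1)
  rw [setIntegral_congr_set hae, ← integral_indicator hT,
    ← integral_indicator polarCoord.open_target.measurableSet]
  congr 1
  ext ⟨r, θ⟩
  by_cases hp : (r, θ) ∈ polarCoord.target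
  · obtain ⟨hr, hθ⟩ := hp
    have hiff := pt_mem_sector_iff hα hr hθ
    rw [indicator_of_mem (show (r, θ) ∈ polarCoord.target from ⟨hr, hθ⟩)]
    by_cases hm : r ≤ 1 ∧ θ ∈ Icc 0 α
    · rw [indicator_of_mem (show (r, θ) ∈ Ioc (0 : ℝ) 1 ×ˢ (Icc (0 : ℝ) α ∩ Ioo (-π) π) from
        ⟨⟨hr, hm.1⟩, hm.2, hθ⟩)]
      simp [polarCoord_symm_apply, indicator_of_mem (hiff.2 hm)]
    · rw [indicator_of_notMem (fun h : (r, θ) ∈ Ioc (0 : ℝ) 1 ×ˢ (Icc (0 : ℝ) α ∩ Ioo (-π) π) =>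
        hm ⟨h.1.2, h.2.1⟩)]
      simp [polarCoord_symm_apply, indicator_of_notMem (fun h => hm (hiff.1 h))]
  · rw [indicator_of_notMem hp, indicator_of_notMem]
    exact fun h => hp ⟨h.1.1, h.2.2⟩

theorem integral_radial {c k : ℝ} (hc : 0 ≤ c) (hk : 0 < k) (hck : c ≤ k) :
    ∫ r in (0 : ℝ)..1, r * max (r * k - c) 0 ^ 2 =
      k ^ 2 / 4 - 2 / 3 * c * k + c ^ 2 / 2 - c ^ 4 / k ^ 2 / 12 := by
  have hcont : Continuous fun r : ℝ => r * max (r * k - c) 0 ^ 2 := by fun_prop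
  have hρ0 : 0 ≤ c / k := by positivity
  have hρ1 : c / k ≤ 1 := (div_le_one hk).2 hck
  rw [← intervalIntegral.integral_add_adjacent_intervals
    (hcont.intervalIntegrable 0 (c / k)) (hcont.intervalIntegrable (c / k) 1)]
  have h0 : ∫ r in (0 : ℝ)..(c / k), r * max (r * k - c) 0 ^ 2 = 0 := by
    rw [intervalIntegral.integral_congr (g := fun _ => 0), intervalIntegral.integral_zero]
    intro r hr
    rw [uIcc_of_le hρ0] at hr
    have : r * k ≤ c := (le_div_iff₀ hk).1 hr.2
    simp [max_eq_right (show r * k - c ≤ 0 by linarith)]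
  have h1 : ∫ r in (c / k)..1, r * max (r * k - c) 0 ^ 2 =
      ∫ r in (c / k)..1, r * (r * k - c) ^ 2 := by
    apply intervalIntegral.integral_congr
    intro r hr
    rw [uIcc_of_le hρ1] at hr
    have : c ≤ r * k := (div_le_iff₀ hk).1 hr.1
    simp [max_eq_left (show 0 ≤ r * k - c by linarith)]
  rw [h0, h1, intervalIntegral.integral_eq_sub_of_hasDerivAt
    (f := fun r => k ^ 2 * r ^ 4 / 4 - 2 / 3 * c * k * r ^ 3 + c ^ 2 * r ^ 2 / 2)]
  · field_simp
    ring
  · intro r _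
    have := (((hasDerivAt_pow 4 r).const_mul (k ^ 2)).div_const 4).sub
      ((hasDerivAt_pow 3 r).const_mul (2 / 3 * c * k)) |>.add
      (((hasDerivAt_pow 2 r).const_mul (c ^ 2)).div_const 2)
    exact this.congr_deriv (by push_cast; ring)
  · exact (by fun_prop : Continuous fun r : ℝ => r * (r * k - c) ^ 2).intervalIntegrable _ _

theorem integral_angular {a : ℝ} (ha : a ∈ Ioc 0 (π / 2)) :
    ∫ θ in (0 : ℝ)..(2 * a), (cos (θ - a) ^ 2 / 4 - 2 / 3 * cos a * cos (θ - a) + cos a ^ 2 / 2 -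
        cos a ^ 4 / cos (θ - a) ^ 2 / 12) =
      a / 4 - 13 / 12 * (sin a * cos a) + a * cos a ^ 2 - sin a * cos a ^ 3 / 6 := by
  have hne : ∀ θ ∈ uIcc 0 (2 * a), cos a = 0 ∨ cos (θ - a) ≠ 0 := by
    intro θ hθ
    rw [uIcc_of_le (by linarith [ha.1])] at hθ
    rcases ha.2.eq_or_lt with h | h
    · left; rw [h, cos_pi_div_two]
    · right
      exact (cos_pos_of_mem_Ioo ⟨by linarith [hθ.1], by linarith [hθ.2]⟩).ne'
  rw [intervalIntegral.integral_eq_sub_of_hasDerivAt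
    (f := fun θ => (θ - a + sin (θ - a) * cos (θ - a)) / 8 - 2 / 3 * cos a * sin (θ - a) +
      cos a ^ 2 / 2 * θ - cos a ^ 4 * tan (θ - a) / 12)]
  · have htan : cos a ^ 4 * tan a = cos a ^ 3 * sin a := by
      rcases eq_or_ne (cos a) 0 with h | h
      · simp [h]
      · rw [tan_eq_sin_div_cos]; field_simp
    have e : 2 * a - a = a := by ring
    simp only [e, zero_sub, sin_neg, cos_neg, tan_neg]
    linear_combination (-1 / 6) * htan
  · intro θ hθ
    have hid : HasDerivAt (fun θ => θ - a) 1 θ := (hasDerivAt_id θ).sub_const a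
    have htan : HasDerivAt (fun θ => cos a ^ 4 * tan (θ - a)) (cos a ^ 4 / cos (θ - a) ^ 2) θ := by
      rcases hne θ hθ with h | h
      · simpa [h] using hasDerivAt_const θ (0 : ℝ)
      · exact (((hasDerivAt_tan h).comp θ hid).const_mul (cos a ^ 4)).congr_deriv (by ring)
    have := (((hid.add (hid.sin.mul hid.cos)).div_const 8).sub
      (hid.sin.const_mul (2 / 3 * cos a))).add ((hasDerivAt_id θ).const_mul (cos a ^ 2 / 2)) |>.sub
      (htan.div_const 12)
    refine this.congr_deriv ?_
    linear_combination (-1 / 8) * sin_sq_add_cos_sq (θ - a)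
  · apply ContinuousOn.intervalIntegrable
    refine ContinuousOn.sub (by fun_prop) (ContinuousOn.div_const ?_ _)
    by_cases h : cos a = 0
    · simp [h, continuousOn_const]
    · exact ContinuousOn.div (by fun_prop) (by fun_prop)
        fun θ hθ => pow_ne_zero _ ((hne θ hθ).resolve_left h)

theorem setIntegral_sector_infDist_sq {α : ℝ} (hα : α ∈ Ioc (0 : ℝ) π) :
    ∫ x in sector α, Metric.infDist x (tri α) ^ 2 = π * Ifun α := by
  rw [setIntegral_sector hα.2]
  have hS : MeasurableSet (Ioc (0 : ℝ) 1 ×ˢ Ioc (0 : ℝ) α) :=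
    measurableSet_Ioc.prod measurableSet_Ioc
  have hcont : Continuous fun p : ℝ × ℝ =>
      p.1 * max (p.1 * cos (p.2 - α / 2) - cos (α / 2)) 0 ^ 2 := by fun_prop
  have hint : IntegrableOn (fun p : ℝ × ℝ =>
      p.1 * max (p.1 * cos (p.2 - α / 2) - cos (α / 2)) 0 ^ 2)
      (Ioc (0 : ℝ) 1 ×ˢ Ioc (0 : ℝ) α) :=
    (hcont.continuousOn.integrableOn_compact (isCompact_Icc.prod isCompact_Icc)).mono_set
      (prod_mono Ioc_subset_Icc_self Ioc_subset_Icc_self)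
  rw [setIntegral_congr_fun (g := fun p : ℝ × ℝ =>
    p.1 * max (p.1 * cos (p.2 - α / 2) - cos (α / 2)) 0 ^ 2) hS]
  swap
  · rintro ⟨r, θ⟩ ⟨hr, hθ⟩
    simp only [infDist_tri hα (Ioc_subset_Icc_self hr) (Ioc_subset_Icc_self hθ)]
  rw [IntegrableOn, Measure.volume_eq_prod, ← Measure.prod_restrict] at hint
  rw [Measure.volume_eq_prod, ← Measure.prod_restrict, integral_prod_symm _ hint,
    integral_Ioc_eq_integral_Ioo]
  have hc : 0 ≤ cos (α / 2) :=
    cos_nonneg_of_mem_Icc ⟨by linarith [hα.1, pi_pos], by linarith [hα.2]⟩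
  rw [setIntegral_congr_fun (g := fun θ => cos (θ - α / 2) ^ 2 / 4 -
    2 / 3 * cos (α / 2) * cos (θ - α / 2) + cos (α / 2) ^ 2 / 2 -
    cos (α / 2) ^ 4 / cos (θ - α / 2) ^ 2 / 12) measurableSet_Ioo]
  swap
  · intro θ hθ
    have hk : 0 < cos (θ - α / 2) :=
      cos_pos_of_mem_Ioo ⟨by linarith [hθ.1, hα.2], by linarith [hθ.2, hα.2]⟩
    have hck : cos (α / 2) ≤ cos (θ - α / 2) := by
      rw [← cos_abs (θ - α / 2)]
      refine cos_le_cos_of_nonneg_of_le_pi (abs_nonneg _) (by linarith [hα.1, hα.2]) ?_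
      exact abs_le.2 ⟨by linarith [hθ.1], by linarith [hθ.2]⟩
    simp only
    rw [← intervalIntegral.integral_of_le zero_le_one, integral_radial hc hk hck]
  have h := integral_angular (a := α / 2) ⟨by linarith [hα.1], by linarith [hα.2]⟩
  have e : 2 * (α / 2) = α := by ring
  rw [e] at h
  rw [← integral_Ioc_eq_integral_Ioo, ← intervalIntegral.integral_of_le hα.1.le, h, Ifun]
  have h2 : sin α = 2 * sin (α / 2) * cos (α / 2) := by rw [← sin_two_mul, e]
  rw [h2]
  field_simp
  ring

theorem sector_integral (α : ℝ) (hα : α ∈ Set.Ioc (0 : ℝ) π) :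
    (1 / π) * (∫ x in sector α, Metric.infDist x (tri α) ^ 2 ∂volume) = Ifun α ∧
    (∀ r θ : ℝ, r ∈ Set.Icc (0 : ℝ) 1 → θ ∈ Set.Icc (0 : ℝ) α →
      pt (r * Real.cos θ) (r * Real.sin θ) ∉ tri α →
      Metric.infDist (pt (r * Real.cos θ) (r * Real.sin θ)) (tri α) =
        r * Real.cos (θ - α / 2) - Real.cos (α / 2)) := by
  refine ⟨?_, fun r θ hr hθ hnot => ?_⟩
  · rw [setIntegral_sector_infDist_sq hα]
    field_simp
  · have hpos := ((isCompact_tri α).isClosed.notMem_iff_infDist_pos ⟨_, pt_zero_mem_tri α⟩).1 hnot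
    rw [infDist_tri hα hr hθ] at hpos ⊢
    exact max_eq_left (by
      by_contra! hneg
      rw [max_eq_right hneg.le] at hpos
      exact lt_irrefl _ hpos)
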